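/- arXiv:1411.4732 — 2 statements merged into one kernel-verified Lean document; each statement's English description precedes it below -/
import Mathlib

section
/- Let ι be a nonempty finite index type, and let Q, (X_i)_{i ∈ ι}, and Y be jointly distributed random variables on finite types with joint pmf p. If the conditional mutual information I(Q:Y|X_i) = 0 for every i ∈ ι, then I(Q:Y) ≤ ∑_y p_Y(y) * min_{i ∈ ι} I(X_i:y), where the sum ranges over y with p_Y(y) > 0. (That is, I_α ≤ I_min.) -/
open Real Finset

/- STATEMENT 6: If `I(Q:Y|X i) = 0` for every `i`, then
`I(Q:Y) ≤ ∑_y p_Y(y) * min_i I(X i : y)`, i.e. `I_α ≤ I_min`.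
The joint pmf is `p : Q × (∀ i, X i) × Y → ℝ`. -/

section Defs

variable {Q : Type*} [Fintype Q] {ι : Type*} [Fintype ι] [DecidableEq ι]
  {X : ι → Type*} [∀ i, Fintype (X i)] [∀ i, DecidableEq (X i)]
  {Y : Type*} [Fintype Y]

/-- Marginal of `Y`. -/
noncomputable def margY (p : Q × (∀ i, X i) × Y → ℝ) (y : Y) : ℝ :=
  ∑ q, ∑ x, p (q, x, y)

/-- Marginal of `Q`. -/
noncomputable def margQ (p : Q × (∀ i, X i) × Y → ℝ) (q : Q) : ℝ :=
  ∑ x, ∑ y, p (q, x, y)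

/-- Marginal of `(Q, Y)`. -/
noncomputable def margQY (p : Q × (∀ i, X i) × Y → ℝ) (q : Q) (y : Y) : ℝ :=
  ∑ x, p (q, x, y)

/-- Marginal of the predictor `X i`. -/
noncomputable def margXi (p : Q × (∀ i, X i) × Y → ℝ) (i : ι) (u : X i) : ℝ :=
  ∑ q, ∑ x, ∑ y, if x i = u then p (q, x, y) else 0

/-- Marginal of `(X i, Y)`. -/
noncomputable def margXiY (p : Q × (∀ i, X i) × Y → ℝ) (i : ι) (u : X i) (y : Y) : ℝ :=
  ∑ q, ∑ x, if x i = u then p (q, x, y) else 0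

/-- Marginal of `(Q, X i)`. -/
noncomputable def margQXi (p : Q × (∀ i, X i) × Y → ℝ) (q : Q) (i : ι) (u : X i) : ℝ :=
  ∑ x, ∑ y, if x i = u then p (q, x, y) else 0

/-- Marginal of `(Q, X i, Y)`. -/
noncomputable def margQXiY (p : Q × (∀ i, X i) × Y → ℝ) (q : Q) (i : ι) (u : X i) (y : Y) : ℝ :=
  ∑ x, if x i = u then p (q, x, y) else 0

/-- Mutual information `I(Q:Y)`. -/
noncomputable def miQY (p : Q × (∀ i, X i) × Y → ℝ) : ℝ :=
  ∑ q, ∑ y, margQY p q y * logb 2 (margQY p q y / (margQ p q * margY p y))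

/-- Conditional mutual information `I(Q:Y|X i)`. -/
noncomputable def condMIQYXi (p : Q × (∀ i, X i) × Y → ℝ) (i : ι) : ℝ :=
  ∑ q, ∑ u : X i, ∑ y,
    margQXiY p q i u y *
      logb 2 (margQXiY p q i u y * margXi p i u / (margQXi p q i u * margXiY p i u y))

/-- Conditional entropy `H(Q|X i)`. -/
noncomputable def condEntQXi (p : Q × (∀ i, X i) × Y → ℝ) (i : ι) : ℝ :=
  -∑ q, ∑ u : X i, margQXi p q i u * logb 2 (margQXi p q i u / margXi p i u)

/-- Specific information `I(X i : y)` of the predictor `X i` about the state `y`. -/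
noncomputable def specInfoXi (p : Q × (∀ i, X i) × Y → ℝ) (i : ι) (y : Y) : ℝ :=
  ∑ u, (margXiY p i u y / margY p y) * logb 2 ((margXiY p i u y / margY p y) / margXi p i u)

end Defs

theorem aux_core (a t : ℝ) (ha : 0 ≤ a) (ht : 0 ≤ t) (h : t = 0 → a = 0) :
    a - t ≤ a * Real.log (a / t) ∧ (a * Real.log (a / t) = a - t → a = t) := by
  rcases ha.eq_or_lt with rfl | ha
  · simp only [zero_mul, zero_sub]
    exact ⟨by linarith, fun h => by linarith⟩
  have ht : 0 < t := ht.lt_of_ne (fun h' => ha.ne' (h h'.symm))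
  have e : Real.log (a / t) = - Real.log (t / a) := by
    rw [← Real.log_inv, inv_div]
  have hp : 0 < t / a := by positivity
  have ea : a * (t / a) = t := by field_simp
  constructor
  · have := Real.log_le_sub_one_of_pos hp
    rw [e]
    nlinarith
  · intro h1
    by_contra hne
    have hne' : t / a ≠ 1 := by
      intro h2
      rw [h2] at ea
      exact hne (by linarith)
    have := Real.log_lt_sub_one_of_pos hp hne'
    rw [e] at h1
    nlinarith

theorem aux_logsum {U : Type*} [Fintype U] (a b : U → ℝ) (ha : ∀ u, 0 ≤ a u)
    (hb : ∀ u, 0 ≤ b u) (h : ∀ u, b u = 0 → a u = 0) :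
    (∑ u, a u) * Real.log ((∑ u, a u) / ∑ u, b u) ≤ ∑ u, a u * Real.log (a u / b u) := by
  have hA : 0 ≤ ∑ u, a u := Finset.sum_nonneg fun u _ => ha u
  have hB : 0 ≤ ∑ u, b u := Finset.sum_nonneg fun u _ => hb u
  rcases hA.eq_or_lt with h0 | hA
  · have : ∀ u, a u = 0 := fun u =>
      (Finset.sum_eq_zero_iff_of_nonneg (fun u _ => ha u)).1 h0.symm u (Finset.mem_univ u)
    simp [this]
  have hB : 0 < ∑ u, b u := by
    refine hB.lt_of_ne fun h0 => hA.ne' ?_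
    refine Finset.sum_eq_zero fun u _ => h u ?_
    exact (Finset.sum_eq_zero_iff_of_nonneg (fun u _ => hb u)).1 h0.symm u (Finset.mem_univ u)
  set A := ∑ u, a u with hAd
  set B := ∑ u, b u with hBd
  have hc : 0 < A / B := by positivity
  have key : ∀ u, a u - b u * (A / B) ≤ a u * Real.log (a u / b u) - a u * Real.log (A / B) := by
    intro u
    have h1 := (aux_core (a u) (b u * (A / B)) (ha u) (mul_nonneg (hb u) hc.le)
      (fun h0 => h u ((mul_eq_zero.1 h0).resolve_right hc.ne'))).1
    rcases (ha u).eq_or_lt with h0 | h0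
    · rw [← h0] at h1 ⊢
      simpa using h1
    have hb' : 0 < b u := (hb u).lt_of_ne fun h' => h0.ne' (h u h'.symm)
    rw [← div_div, Real.log_div (by positivity) hc.ne'] at h1
    linarith
  have hs := Finset.sum_le_sum fun u (_ : u ∈ Finset.univ) => key u
  rw [Finset.sum_sub_distrib, Finset.sum_sub_distrib, ← Finset.sum_mul, ← Finset.sum_mul,
    ← hAd, ← hBd] at hs
  have : B * (A / B) = A := by field_simp
  linarith

theorem aux_main {Q U Y : Type*} [Fintype Q] [Fintype U] [Fintype Y]
    (f : Q → U → Y → ℝ) (hf : ∀ q u y, 0 ≤ f q u y)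
    (gQU : Q → U → ℝ) (gUY : U → Y → ℝ) (gU : U → ℝ) (gQ : Q → ℝ) (gY : Y → ℝ) (gQY : Q → Y → ℝ)
    (hQU : ∀ q u, gQU q u = ∑ y, f q u y) (hUY : ∀ u y, gUY u y = ∑ q, f q u y)
    (hU : ∀ u, gU u = ∑ q, gQU q u) (hU' : ∀ u, gU u = ∑ y, gUY u y)
    (hQ : ∀ q, gQ q = ∑ u, gQU q u) (hQY : ∀ q y, gQY q y = ∑ u, f q u y)
    (hc : ∑ q, ∑ u, ∑ y, f q u y * logb 2 (f q u y * gU u / (gQU q u * gUY u y)) = 0)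
    (y : Y) (hy : 0 < gY y) :
    ∑ q, gQY q y * logb 2 (gQY q y / (gQ q * gY y)) ≤
      gY y * ∑ u, (gUY u y / gY y) * logb 2 ((gUY u y / gY y) / gU u) := by
  have nQU : ∀ q u, 0 ≤ gQU q u := fun q u => by
    rw [hQU]; exact Finset.sum_nonneg fun _ _ => hf _ _ _
  have nUY : ∀ u y, 0 ≤ gUY u y := fun u y => by
    rw [hUY]; exact Finset.sum_nonneg fun _ _ => hf _ _ _
  have nU : ∀ u, 0 ≤ gU u := fun u => by
    rw [hU]; exact Finset.sum_nonneg fun _ _ => nQU _ _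
  have leQU : ∀ q u y, f q u y ≤ gQU q u := fun q u y => by
    rw [hQU]; exact Finset.single_le_sum (f := fun y => f q u y) (fun _ _ => hf _ _ _) (Finset.mem_univ y)
  have leUY : ∀ q u y, f q u y ≤ gUY u y := fun q u y => by
    rw [hUY]; exact Finset.single_le_sum (f := fun q => f q u y) (fun _ _ => hf _ _ _) (Finset.mem_univ q)
  have leU : ∀ q u, gQU q u ≤ gU u := fun q u => by
    rw [hU]; exact Finset.single_le_sum (f := fun q => gQU q u) (fun _ _ => nQU _ _) (Finset.mem_univ q)
  -- conditional independence
  have zt : ∀ q u y, gQU q u * gUY u y / gU u = 0 → f q u y = 0 := by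
    intro q u y h
    by_contra h0
    have h1 : 0 < f q u y := (hf q u y).lt_of_ne (Ne.symm h0)
    have h2 := h1.trans_le (leQU q u y)
    have h3 := h1.trans_le (leUY q u y)
    have h4 := h2.trans_le (leU q u)
    have : 0 < gQU q u * gUY u y / gU u := by positivity
    exact this.ne' h
  have core := fun q u y => aux_core (f q u y) (gQU q u * gUY u y / gU u) (hf q u y)
    (div_nonneg (mul_nonneg (nQU _ _) (nUY _ _)) (nU _)) (zt q u y)
  have l2 : 0 < Real.log 2 := Real.log_pos (by norm_num)
  have hc' : ∑ q, ∑ u, ∑ y, f q u y * Real.log (f q u y / (gQU q u * gUY u y / gU u)) = 0 := by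
    have : ∑ q, ∑ u, ∑ y, f q u y * logb 2 (f q u y * gU u / (gQU q u * gUY u y)) =
        (∑ q, ∑ u, ∑ y, f q u y * Real.log (f q u y / (gQU q u * gUY u y / gU u))) / Real.log 2 := by
      simp only [div_div_eq_mul_div (f _ _ _)]
      simp only [Finset.sum_div, logb, mul_div_assoc]
    rw [this] at hc
    exact (div_eq_zero_iff.1 hc).resolve_right l2.ne'
  have st : ∑ q, ∑ u, ∑ y, (f q u y - gQU q u * gUY u y / gU u) = 0 := by
    simp only [Finset.sum_sub_distrib]
    rw [sub_eq_zero]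
    rw [Finset.sum_comm, Finset.sum_comm (f := fun q u => ∑ y, gQU q u * gUY u y / gU u)]
    refine Finset.sum_congr rfl fun u _ => ?_
    simp only [← hQU, ← Finset.sum_div, ← Finset.mul_sum, ← hU', ← Finset.sum_mul, ← hU]
    rcases eq_or_ne (gU u) 0 with h | h
    · simp [h]
    · field_simp
  have ci : ∀ q u y, f q u y = gQU q u * gUY u y / gU u := by
    have hz : ∑ q, ∑ u, ∑ y, (f q u y * Real.log (f q u y / (gQU q u * gUY u y / gU u))
        - (f q u y - gQU q u * gUY u y / gU u)) = 0 := by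
      have : ∀ q u, ∑ y, (f q u y * Real.log (f q u y / (gQU q u * gUY u y / gU u))
        - (f q u y - gQU q u * gUY u y / gU u)) =
          ∑ y, f q u y * Real.log (f q u y / (gQU q u * gUY u y / gU u)) -
          ∑ y, (f q u y - gQU q u * gUY u y / gU u) := fun q u => Finset.sum_sub_distrib _ _
      simp only [this]
      simp_rw [Finset.sum_sub_distrib (f := fun u => ∑ y, f _ u y * _)]
      rw [Finset.sum_sub_distrib, hc', st, sub_zero]
    have n0 : ∀ q u y, 0 ≤ f q u y * Real.log (f q u y / (gQU q u * gUY u y / gU u))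
        - (f q u y - gQU q u * gUY u y / gU u) := fun q u y => by linarith [(core q u y).1]
    intro q u y
    have h1 := (Finset.sum_eq_zero_iff_of_nonneg (fun q _ => Finset.sum_nonneg fun u _ =>
      Finset.sum_nonneg fun y _ => n0 q u y)).1 hz q (Finset.mem_univ q)
    have h2 := (Finset.sum_eq_zero_iff_of_nonneg (fun u _ =>
      Finset.sum_nonneg fun y _ => n0 q u y)).1 h1 u (Finset.mem_univ u)
    have h3 := (Finset.sum_eq_zero_iff_of_nonneg (fun y _ => n0 q u y)).1 h2 y (Finset.mem_univ y)
    exact (core q u y).2 (by linarith)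
  -- log-sum inequality
  have ls : ∀ q, gQY q y * Real.log (gQY q y / (gQ q * gY y)) ≤
      ∑ u, f q u y * Real.log ((gUY u y / gY y) / gU u) := by
    intro q
    have h := aux_logsum (fun u => f q u y) (fun u => gQU q u * gY y) (fun u => hf q u y)
      (fun u => mul_nonneg (nQU q u) hy.le) (fun u h0 => by
        have h1 := (mul_eq_zero.1 h0).resolve_right hy.ne'
        exact le_antisymm (h1 ▸ leQU q u y) (hf q u y))
    rw [← hQY, ← Finset.sum_mul, ← hQ] at h
    refine h.trans (le_of_eq (Finset.sum_congr rfl fun u _ => ?_))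
    rcases (hf q u y).eq_or_lt with h0 | h0
    · simp [← h0]
    have h2 := h0.trans_le (leQU q u y)
    have h4 := h2.trans_le (leU q u)
    congr 2
    rw [ci q u y]
    field_simp
  have hs := Finset.sum_le_sum fun q (_ : q ∈ Finset.univ) => ls q
  rw [Finset.sum_comm] at hs
  simp only [← Finset.sum_mul, ← hUY] at hs
  have e1 : ∑ q, gQY q y * logb 2 (gQY q y / (gQ q * gY y)) =
      (∑ q, gQY q y * Real.log (gQY q y / (gQ q * gY y))) / Real.log 2 := by
    simp only [Finset.sum_div, logb, mul_div_assoc]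
  have e2 : gY y * ∑ u, (gUY u y / gY y) * logb 2 ((gUY u y / gY y) / gU u) =
      (∑ u, gUY u y * Real.log ((gUY u y / gY y) / gU u)) / Real.log 2 := by
    rw [Finset.sum_div, Finset.mul_sum]
    refine Finset.sum_congr rfl fun u _ => ?_
    rw [logb, ← mul_assoc, mul_div_cancel₀ _ hy.ne', mul_div_assoc]
  rw [e1, e2]
  exact div_le_div_of_nonneg_right hs l2.le

theorem stmt_6 {Q : Type*} [Fintype Q] {ι : Type*} [Fintype ι] [DecidableEq ι] [Nonempty ι]
    {X : ι → Type*} [∀ i, Fintype (X i)] [∀ i, DecidableEq (X i)]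
    {Y : Type*} [Fintype Y]
    (p : Q × (∀ i, X i) × Y → ℝ)
    (hnn : ∀ a, 0 ≤ p a)
    (hsum : ∑ a, p a = 1)
    (hcmi : ∀ i, condMIQYXi p i = 0) :
    miQY p ≤
      ∑ y ∈ univ.filter (fun y => 0 < margY p y),
        margY p y * univ.inf' univ_nonempty (fun i => specInfoXi p i y) := by
  have nQY : ∀ q y, 0 ≤ margQY p q y := fun q y => Finset.sum_nonneg fun _ _ => hnn _
  have hYs : ∀ y, margY p y = ∑ q, margQY p q y := fun y => rfl
  have hmi : miQY p = ∑ y ∈ univ.filter (fun y => 0 < margY p y),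
      ∑ q, margQY p q y * logb 2 (margQY p q y / (margQ p q * margY p y)) := by
    unfold miQY
    rw [Finset.sum_comm, Finset.sum_filter]
    refine Finset.sum_congr rfl fun y _ => ?_
    split_ifs with h
    · rfl
    · refine Finset.sum_eq_zero fun q _ => ?_
      have h1 : margQY p q y ≤ margY p y := by
        rw [hYs]
        exact Finset.single_le_sum (f := fun q => margQY p q y) (fun _ _ => nQY _ _)
          (Finset.mem_univ q)
      have : margQY p q y = 0 := le_antisymm (by linarith) (nQY q y)
      rw [this, zero_mul]
  rw [hmi]
  refine Finset.sum_le_sum fun y hy => ?_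
  have hy : 0 < margY p y := (Finset.mem_filter.1 hy).2
  obtain ⟨i, -, hi⟩ := Finset.exists_mem_eq_inf' (univ_nonempty (α := ι))
    (fun i => specInfoXi p i y)
  rw [hi]
  refine aux_main (fun q u y => margQXiY p q i u y)
    (fun q u y => Finset.sum_nonneg fun x _ => by split_ifs; exacts [hnn _, le_rfl])
    (fun q u => margQXi p q i u) (margXiY p i) (margXi p i) (margQ p) (margY p) (margQY p)
    ?_ ?_ ?_ ?_ ?_ ?_ (hcmi i) y hy
  · intro q u
    exact Finset.sum_comm
  · intro u y
    rfl
  · intro u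
    rfl
  · intro u
    simp only [margXi, margXiY]
    rw [Finset.sum_comm]
    conv_rhs => rw [Finset.sum_comm]
    rw [Finset.sum_comm]
    exact Finset.sum_congr rfl fun q _ => Finset.sum_comm
  · intro q
    simp only [margQ, margQXi]
    rw [Finset.sum_comm]
    conv_rhs => rw [Finset.sum_comm]
    rw [Finset.sum_comm]
    refine Finset.sum_congr rfl fun x _ => ?_
    rw [Finset.sum_comm]
    simp
  · intro q y
    simp only [margQY, margQXiY]
    rw [Finset.sum_comm]
    simp
end

section
/- Let ι be a nonempty finite index type, and let Q, (X_i)_{i ∈ ι}, and Y be jointly distributed random variables on finite types with joint pmf p. If H(Q|X_i) = 0 for every i ∈ ι, then I(Q:Y) ≤ ∑_y p_Y(y) * min_{i ∈ ι} I(X_i:y), where the sum ranges over y with p_Y(y) > 0. (That is, I_∧ ≤ I_min.) -/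
open Real Finset

section Helpers

variable {Q : Type*} [Fintype Q] {ι : Type*} [Fintype ι] [DecidableEq ι]
  {X : ι → Type*} [∀ i, Fintype (X i)] [∀ i, DecidableEq (X i)]
  {Y : Type*} [Fintype Y]

lemma aux_nn (p : Q × (∀ i, X i) × Y → ℝ) (hnn : ∀ a, 0 ≤ p a) (q : Q) (i : ι) (u : X i) (y : Y) :
    0 ≤ margQXiY p q i u y := by
  unfold margQXiY
  refine sum_nonneg fun x _ => ?_
  split_ifs <;> simp [hnn]

lemma aux_QXi (p : Q × (∀ i, X i) × Y → ℝ) (q : Q) (i : ι) (u : X i) :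
    margQXi p q i u = ∑ y, margQXiY p q i u y := by
  unfold margQXi margQXiY
  exact sum_comm

lemma aux_XiY (p : Q × (∀ i, X i) × Y → ℝ) (i : ι) (u : X i) (y : Y) :
    margXiY p i u y = ∑ q, margQXiY p q i u y := rfl

lemma aux_Xi (p : Q × (∀ i, X i) × Y → ℝ) (i : ι) (u : X i) :
    margXi p i u = ∑ q, margQXi p q i u := rfl

lemma aux_QY (p : Q × (∀ i, X i) × Y → ℝ) (q : Q) (i : ι) (y : Y) :
    margQY p q y = ∑ u : X i, margQXiY p q i u y := by
  unfold margQY margQXiY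
  rw [sum_comm]
  simp

lemma aux_Q (p : Q × (∀ i, X i) × Y → ℝ) (q : Q) (i : ι) :
    margQ p q = ∑ u : X i, margQXi p q i u := by
  unfold margQ margQXi
  symm
  rw [sum_comm]
  refine sum_congr rfl fun x _ => ?_
  rw [sum_comm]
  simp

lemma aux_Y (p : Q × (∀ i, X i) × Y → ℝ) (y : Y) :
    margY p y = ∑ q, margQY p q y := rfl

lemma aux_det (p : Q × (∀ i, X i) × Y → ℝ) (hnn : ∀ a, 0 ≤ p a) (i : ι)
    (hdet : condEntQXi p i = 0) (q : Q) (u : X i) (h : margQXi p q i u ≠ 0) :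
    margQXi p q i u = margXi p i u := by
  have hm : ∀ q u, 0 ≤ margQXi p q i u := fun q u => by
    rw [aux_QXi]; exact sum_nonneg fun y _ => aux_nn p hnn q i u y
  have hle : ∀ q u, margQXi p q i u ≤ margXi p i u := fun q u => by
    rw [aux_Xi]; exact single_le_sum (f := fun q => margQXi p q i u) (fun q _ => hm q u) (mem_univ q)
  have hterm : ∀ q u, margQXi p q i u * logb 2 (margQXi p q i u / margXi p i u) ≤ 0 := fun q u => by
    refine mul_nonpos_of_nonneg_of_nonpos (hm q u) ?_
    refine logb_nonpos (by norm_num) (div_nonneg (hm q u) ((hm q u).trans (hle q u))) ?_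
    exact div_le_one_of_le₀ (hle q u) ((hm q u).trans (hle q u))
  unfold condEntQXi at hdet
  rw [neg_eq_zero, sum_eq_zero_iff_of_nonpos (fun q _ => sum_nonpos fun u _ => hterm q u)] at hdet
  have h1 := hdet q (mem_univ q)
  rw [sum_eq_zero_iff_of_nonpos (fun u _ => hterm q u)] at h1
  have h2 := (mul_eq_zero.mp (h1 u (mem_univ u))).resolve_left h
  have hpos : 0 < margQXi p q i u := lt_of_le_of_ne (hm q u) (Ne.symm h)
  have hpos' : 0 < margXi p i u := hpos.trans_le (hle q u)
  have h3 := eq_one_of_pos_of_logb_eq_zero (b := 2) (by norm_num) (div_pos hpos hpos') h2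
  rwa [div_eq_one_iff_eq hpos'.ne'] at h3

lemma aux_det' (p : Q × (∀ i, X i) × Y → ℝ) (hnn : ∀ a, 0 ≤ p a) (i : ι)
    (hdet : condEntQXi p i = 0) (q : Q) (u : X i) (h : margQXi p q i u ≠ 0) (y : Y) :
    margQXiY p q i u y = margXiY p i u y := by
  have h1 := aux_det p hnn i hdet q u h
  have hX : margXi p i u = ∑ y, margXiY p i u y := by
    simp only [aux_Xi, aux_XiY, aux_QXi]; exact sum_comm
  rw [aux_QXi, hX] at h1
  refine (sum_eq_sum_iff_of_le fun y _ => ?_).mp h1 y (mem_univ y)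
  rw [aux_XiY]
  exact single_le_sum (f := fun q => margQXiY p q i u y) (fun q _ => aux_nn p hnn q i u y) (mem_univ q)

lemma aux_term (p : Q × (∀ i, X i) × Y → ℝ) (hnn : ∀ a, 0 ≤ p a) (i : ι)
    (hdet : condEntQXi p i = 0) (y : Y) (hy : 0 < margY p y) (q : Q) (u : X i) :
    margQXiY p q i u y * logb 2 (margQY p q y / (margQ p q * margY p y))
      - margQXiY p q i u y * logb 2 ((margXiY p i u y / margY p y) / margXi p i u)
      ≤ (margQY p q y * margQXi p q i u / margQ p q - margQXiY p q i u y) / log 2 := by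
  have h2 : 0 < log 2 := log_pos (by norm_num)
  have ht := aux_nn p hnn
  have hm : ∀ q u, 0 ≤ margQXi p q i u := fun q u => by
    rw [aux_QXi]; exact sum_nonneg fun y _ => aux_nn p hnn q i u y
  have hA : margQXiY p q i u y ≤ margQY p q y := by
    rw [aux_QY p q i y]
    exact single_le_sum (f := fun u => margQXiY p q i u y) (fun u _ => ht q i u y) (mem_univ u)
  have hb : margQXiY p q i u y ≤ margQXi p q i u := by
    rw [aux_QXi]
    exact single_le_sum (f := fun y => margQXiY p q i u y) (fun y _ => ht q i u y) (mem_univ y)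
  have hB : margQXi p q i u ≤ margQ p q := by
    rw [aux_Q p q i]
    exact single_le_sum (f := fun u => margQXi p q i u) (fun u _ => hm q u) (mem_univ u)
  rcases (ht q i u y).eq_or_lt with h0 | h0
  · rw [← h0] at hA ⊢
    simp only [zero_mul, sub_zero]
    exact div_nonneg (div_nonneg (mul_nonneg hA (hm q u)) ((hm q u).trans hB)) h2.le
  · have hbpos := h0.trans_le hb
    have hBpos := hbpos.trans_le hB
    have hApos := h0.trans_le hA
    rw [← aux_det p hnn i hdet q u hbpos.ne', ← aux_det' p hnn i hdet q u hbpos.ne' y]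
    generalize margQXiY p q i u y = t at *
    generalize margQXi p q i u = b at *
    generalize margQ p q = B at *
    generalize margQY p q y = A at *
    generalize margY p y = c at *
    rw [← mul_sub, ← logb_div (by positivity) (by positivity)]
    unfold logb
    rw [← mul_div_assoc]
    refine div_le_div_of_nonneg_right ?_ h2.le
    have h3 := log_le_sub_one_of_pos (x := A / (B * c) / (t / c / b)) (by positivity)
    refine (mul_le_mul_of_nonneg_left h3 h0.le).trans (le_of_eq ?_)
    field_simp

lemma aux_main_s7 (p : Q × (∀ i, X i) × Y → ℝ) (hnn : ∀ a, 0 ≤ p a) (i : ι)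
    (hdet : condEntQXi p i = 0) (y : Y) (hy : 0 < margY p y) :
    ∑ q, margQY p q y * logb 2 (margQY p q y / (margQ p q * margY p y))
      ≤ margY p y * specInfoXi p i y := by
  have key := sum_le_sum fun q (_ : q ∈ univ) => sum_le_sum fun u (_ : u ∈ univ) =>
    aux_term p hnn i hdet y hy q u
  have hR : ∑ q, ∑ u : X i,
      (margQY p q y * margQXi p q i u / margQ p q - margQXiY p q i u y) / log 2 = 0 := by
    refine sum_eq_zero fun q _ => ?_
    rw [← sum_div, sum_sub_distrib, ← sum_div, ← mul_sum, ← aux_Q, ← aux_QY]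
    by_cases h : margQ p q = 0
    · have hz : margQY p q y = 0 := by
        have h' : margQ p q = ∑ y, margQY p q y := by
          unfold margQ margQY; exact sum_comm
        rw [h', sum_eq_zero_iff_of_nonneg
          (fun y _ => by unfold margQY; exact sum_nonneg fun x _ => hnn _)] at h
        exact h y (mem_univ y)
      simp [hz]
    · rw [mul_div_cancel_right₀ _ h]; simp
  rw [hR] at key
  simp only [sum_sub_distrib] at key
  have h1 : ∑ q, ∑ u : X i, margQXiY p q i u y * logb 2 (margQY p q y / (margQ p q * margY p y))
      = ∑ q, margQY p q y * logb 2 (margQY p q y / (margQ p q * margY p y)) := by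
    refine sum_congr rfl fun q _ => ?_
    rw [← sum_mul, ← aux_QY]
  have h2 : ∑ q, ∑ u : X i, margQXiY p q i u y *
      logb 2 ((margXiY p i u y / margY p y) / margXi p i u) = margY p y * specInfoXi p i y := by
    rw [sum_comm]
    unfold specInfoXi
    rw [mul_sum]
    refine sum_congr rfl fun u _ => ?_
    rw [← sum_mul, ← aux_XiY, ← mul_assoc, mul_div_cancel₀ _ hy.ne']
  rw [h1, h2] at key
  linarith

end Helpers

theorem stmt_7 {Q : Type*} [Fintype Q] {ι : Type*} [Fintype ι] [DecidableEq ι] [Nonempty ι]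
    {X : ι → Type*} [∀ i, Fintype (X i)] [∀ i, DecidableEq (X i)]
    {Y : Type*} [Fintype Y]
    (p : Q × (∀ i, X i) × Y → ℝ)
    (hnn : ∀ a, 0 ≤ p a)
    (hsum : ∑ a, p a = 1)
    (hdet : ∀ i, condEntQXi p i = 0) :
    miQY p ≤
      ∑ y ∈ univ.filter (fun y => 0 < margY p y),
        margY p y * univ.inf' univ_nonempty (fun i => specInfoXi p i y) := by
  have hYnn : ∀ y, 0 ≤ margY p y := fun y => by
    unfold margY; exact sum_nonneg fun q _ => sum_nonneg fun x _ => hnn _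
  unfold miQY
  rw [sum_comm, sum_filter]
  refine sum_le_sum fun y _ => ?_
  split_ifs with hy
  · obtain ⟨i, _, hi⟩ := exists_mem_eq_inf' (univ_nonempty (α := ι)) (fun i => specInfoXi p i y)
    rw [hi]
    exact aux_main_s7 p hnn i (hdet i) y hy
  · have h0 : margY p y = 0 := le_antisymm (not_lt.mp hy) (hYnn y)
    simp [h0]
end
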